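/- Let X and Y be real normed vector spaces with X infinite-dimensional, let T : X → Y be a bounded linear operator, and let E be a dense linear subspace of X. Then τ(T|_E) ≥ τ(T). -/

import Mathlib

/-- `inf_{m ∈ S_M} ‖Tm‖`, the infimum of `‖Tm‖` over the unit sphere of a subspace `M`. -/
noncomputable def sphereInf {X Y : Type*} [NormedAddCommGroup X] [NormedSpace ℝ X]
    [NormedAddCommGroup Y] [NormedSpace ℝ Y] (T : X →L[ℝ] Y) (M : Submodule ℝ X) : ℝ :=
  sInf {s : ℝ | ∃ m : X, m ∈ M ∧ ‖m‖ = 1 ∧ s = ‖T m‖}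

/-- `τ(T) = sup_{M ∈ I(X)} inf_{m ∈ S_M} ‖Tm‖`. -/
noncomputable def opTau {X Y : Type*} [NormedAddCommGroup X] [NormedSpace ℝ X]
    [NormedAddCommGroup Y] [NormedSpace ℝ Y] (T : X →L[ℝ] Y) : ℝ :=
  sSup {r : ℝ | ∃ M : Submodule ℝ X, ¬ FiniteDimensional ℝ M ∧ r = sphereInf T M}

/-- coefficient bound for a triangular system of functionals -/
lemma coeff_bound {X : Type*} [NormedAddCommGroup X] [NormedSpace ℝ X]
    (m : ℕ → X) (f : ℕ → X →L[ℝ] ℝ) (hm : ∀ k, ‖m k‖ = 1) (hf : ∀ k, ‖f k‖ = 1)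
    (hd : ∀ k, f k (m k) = 1) (ht : ∀ i j, i < j → f i (m j) = 0)
    (a : ℕ → ℝ) (n : ℕ) (k : ℕ) (hk : k < n) :
    |a k| ≤ 2 ^ k * ‖∑ i ∈ Finset.range n, a i • m i‖ := by
  induction k using Nat.strong_induction_on with
  | _ k ih =>
  set x := ∑ i ∈ Finset.range n, a i • m i with hx
  have h1 : f k x = ∑ i ∈ Finset.range (k+1), a i * f k (m i) := by
    rw [hx, map_sum]
    simp only [map_smul, smul_eq_mul]
    symm
    apply Finset.sum_subset
    · intro i hi
      simp only [Finset.mem_range] at *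
      omega
    · intro i _ hi
      simp only [Finset.mem_range] at hi
      rw [ht k i (by omega), mul_zero]
  rw [Finset.sum_range_succ, hd, mul_one] at h1
  have h2 : |f k x| ≤ ‖x‖ := by
    have := (f k).le_opNorm x
    rwa [hf, one_mul, Real.norm_eq_abs] at this
  have h3 : |∑ i ∈ Finset.range k, a i * f k (m i)| ≤ ∑ i ∈ Finset.range k, 2 ^ i * ‖x‖ := by
    refine (Finset.abs_sum_le_sum_abs _ _).trans (Finset.sum_le_sum ?_)
    intro i hi
    have hi' := Finset.mem_range.1 hi
    have h4 : |f k (m i)| ≤ 1 := by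
      have := (f k).le_opNorm (m i)
      rwa [hf, hm, one_mul, Real.norm_eq_abs] at this
    rw [abs_mul]
    calc |a i| * |f k (m i)| ≤ |a i| * 1 := by gcongr
      _ ≤ _ := by rw [mul_one]; exact ih i hi' (by omega)
  rw [← Finset.sum_mul, geom_sum_eq (by norm_num)] at h3
  have h5 : a k = f k x - ∑ i ∈ Finset.range k, a i * f k (m i) := by linarith
  rw [h5]
  refine (abs_sub _ _).trans ?_
  norm_num at h3
  linarith

lemma exists_unit {X : Type*} [NormedAddCommGroup X] [NormedSpace ℝ X]
    (M : Submodule ℝ X) (hM : ¬ FiniteDimensional ℝ M) (s : Finset (X →L[ℝ] ℝ)) :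
    ∃ m ∈ M, ‖m‖ = 1 ∧ ∀ f ∈ s, f m = 0 := by
  let L : M →ₗ[ℝ] (s → ℝ) := LinearMap.pi fun f => (f.1 : X →ₗ[ℝ] ℝ).comp M.subtype
  have hL : ¬ Function.Injective L := fun h => hM (Module.Finite.of_injective L h)
  rw [← LinearMap.ker_eq_bot, Submodule.eq_bot_iff] at hL
  push Not at hL
  obtain ⟨x, hx, hx0⟩ := hL
  have hx0' : (x : X) ≠ 0 := by simpa using hx0
  refine ⟨‖(x : X)‖⁻¹ • (x : X), M.smul_mem _ x.2, norm_smul_inv_norm hx0', ?_⟩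
  intro f hf
  have := congrFun (LinearMap.mem_ker.1 hx) ⟨f, hf⟩
  have h2 : f (x : X) = 0 := this
  rw [map_smul, h2, smul_zero]

lemma exists_system {X : Type*} [NormedAddCommGroup X] [NormedSpace ℝ X]
    (M : Submodule ℝ X) (hM : ¬ FiniteDimensional ℝ M) :
    ∃ (m : ℕ → X) (f : ℕ → X →L[ℝ] ℝ), (∀ k, m k ∈ M) ∧ (∀ k, ‖m k‖ = 1) ∧ (∀ k, ‖f k‖ = 1) ∧
    (∀ k, f k (m k) = 1) ∧ (∀ i j, i < j → f i (m j) = 0) := by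
  classical
  obtain ⟨g, hg, hr⟩ := exists_seq_of_forall_finset_exists
    (fun p : X × (X →L[ℝ] ℝ) => p.1 ∈ M ∧ ‖p.1‖ = 1 ∧ ‖p.2‖ = 1 ∧ p.2 p.1 = 1)
    (fun p q => p.2 q.1 = 0) (by
      intro s _
      obtain ⟨m, hm, h1, h2⟩ := exists_unit M hM (s.image Prod.snd)
      have hm0 : m ≠ 0 := by
        rintro rfl
        simp at h1
      obtain ⟨f, hf, hfm⟩ := exists_dual_vector ℝ m (by simpa using hm0)
      refine ⟨(m, f), ⟨hm, h1, hf, ?_⟩, ?_⟩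
      · simp [hfm, h1]
      · intro p hp
        exact h2 _ (Finset.mem_image_of_mem _ hp))
  exact ⟨fun k => (g k).1, fun k => (g k).2, fun k => (hg k).1, fun k => (hg k).2.1,
    fun k => (hg k).2.2.1, fun k => (hg k).2.2.2, fun i j h => hr i j h⟩

lemma sphereInf_le' {X Y : Type*} [NormedAddCommGroup X] [NormedSpace ℝ X]
    [NormedAddCommGroup Y] [NormedSpace ℝ Y] (T : X →L[ℝ] Y) (M : Submodule ℝ X) (m : X)
    (hm : m ∈ M) (h1 : ‖m‖ = 1) : sphereInf T M ≤ ‖T m‖ := by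
  refine csInf_le ⟨0, ?_⟩ ⟨m, hm, h1, rfl⟩
  rintro _ ⟨m, -, -, rfl⟩
  exact norm_nonneg _

lemma sphereInf_nonneg' {X Y : Type*} [NormedAddCommGroup X] [NormedSpace ℝ X]
    [NormedAddCommGroup Y] [NormedSpace ℝ Y] (T : X →L[ℝ] Y) (M : Submodule ℝ X) :
    0 ≤ sphereInf T M := by
  refine Real.sInf_nonneg ?_
  rintro _ ⟨m, -, -, rfl⟩
  exact norm_nonneg _

lemma sphereInf_mul_le {X Y : Type*} [NormedAddCommGroup X] [NormedSpace ℝ X]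
    [NormedAddCommGroup Y] [NormedSpace ℝ Y] (T : X →L[ℝ] Y) (M : Submodule ℝ X) (m : X)
    (hm : m ∈ M) : sphereInf T M * ‖m‖ ≤ ‖T m‖ := by
  by_cases h : m = 0
  · simp [h]
  have h1 := sphereInf_le' T M (‖m‖⁻¹ • m) (M.smul_mem _ hm) (norm_smul_inv_norm h)
  have h0 : 0 < ‖m‖ := norm_pos_iff.2 h
  rw [map_smul, norm_smul, norm_inv, norm_norm, inv_mul_eq_div, le_div_iff₀ h0] at h1
  exact h1

/-- perturbation into a dense subspace -/
lemma exists_perturb {X Y : Type*} [NormedAddCommGroup X] [NormedSpace ℝ X]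
    [NormedAddCommGroup Y] [NormedSpace ℝ Y]
    (T : X →L[ℝ] Y) (E : Submodule ℝ X) (hE : Dense (E : Set X))
    (M : Submodule ℝ X) (hM : ¬ FiniteDimensional ℝ M) (δ : ℝ) (hδ : 0 < δ) (hδ' : δ ≤ 1 / 2) :
    ∃ N : Submodule ℝ E, ¬ FiniteDimensional ℝ N ∧
      ∀ y ∈ N, ∃ x ∈ M, ‖x - (y : X)‖ ≤ δ * ‖x‖ := by
  obtain ⟨m, f, hmM, hm, hf, hd, ht⟩ := exists_system M hM
  have he : ∀ k, ∃ e : E, ‖m k - (e : X)‖ < δ * (1/4) ^ (k+1) := by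
    intro k
    obtain ⟨e, he, h⟩ := hE.exists_dist_lt (m k) (ε := δ * (1/4) ^ (k+1)) (by positivity)
    exact ⟨⟨e, he⟩, by rwa [dist_eq_norm] at h⟩
  choose e he using he
  have key : ∀ a : ℕ →₀ ℝ, ∃ n, (∀ k, a k ≠ 0 → k < n) ∧
      Finsupp.linearCombination ℝ e a = ∑ i ∈ Finset.range n, a i • e i ∧
      ‖(∑ i ∈ Finset.range n, a i • m i) - ((∑ i ∈ Finset.range n, a i • e i : E) : X)‖ ≤
        δ * ‖∑ i ∈ Finset.range n, a i • m i‖ := by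
    intro a
    obtain ⟨n, hn⟩ := a.support.exists_nat_subset_range
    refine ⟨n, fun k hk => Finset.mem_range.1 (hn (Finsupp.mem_support_iff.2 hk)), ?_, ?_⟩
    · rw [Finsupp.linearCombination_apply]
      exact Finsupp.sum_of_support_subset _ hn _ (by simp)
    · have hb := coeff_bound m f hm hf hd ht a n
      set x := ∑ i ∈ Finset.range n, a i • m i with hx
      have h1 : x - ((∑ i ∈ Finset.range n, a i • e i : E) : X) =
          ∑ i ∈ Finset.range n, a i • (m i - (e i : X)) := by
        rw [hx]
        simp [smul_sub, Finset.sum_sub_distrib]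
      rw [h1]
      calc _ ≤ ∑ i ∈ Finset.range n, ‖a i • (m i - (e i : X))‖ := norm_sum_le _ _
        _ ≤ ∑ i ∈ Finset.range n, (1/2 : ℝ)^i * (δ * ‖x‖ / 4) := by
          refine Finset.sum_le_sum fun i hi => ?_
          rw [norm_smul, Real.norm_eq_abs]
          calc _ ≤ (2 ^ i * ‖x‖) * (δ * (1/4) ^ (i+1)) := by
                gcongr
                · exact hb i (Finset.mem_range.1 hi)
                · exact (he i).le
            _ = _ := by
                have : (1/4 : ℝ) ^ (i+1) = (1/2)^i * (1/2)^i / 4 := by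
                  rw [← mul_pow, pow_succ]; norm_num; ring
                rw [this]
                have h2 : (2:ℝ)^i * (1/2)^i = 1 := by rw [← mul_pow]; norm_num
                linear_combination (‖x‖ * δ * (1/2)^i / 4) * h2
        _ = (∑ i ∈ Finset.range n, (1/2 : ℝ)^i) * (δ * ‖x‖ / 4) := by rw [Finset.sum_mul]
        _ ≤ 2 * (δ * ‖x‖ / 4) := by
          gcongr
          exact sum_geometric_two_le n
        _ ≤ _ := by
          have : 0 ≤ δ * ‖x‖ := by positivity
          linarith
  have hinj : Function.Injective (Finsupp.linearCombination ℝ e) := by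
    rw [← LinearMap.ker_eq_bot, Submodule.eq_bot_iff]
    intro a ha
    obtain ⟨n, hn, h1, h2⟩ := key a
    rw [← h1, LinearMap.mem_ker.1 ha] at h2
    have hb := coeff_bound m f hm hf hd ht a n
    set x := ∑ i ∈ Finset.range n, a i • m i with hx
    simp only [ZeroMemClass.coe_zero, sub_zero] at h2
    have hx0 : ‖x‖ = 0 := by nlinarith [norm_nonneg x]
    ext k
    by_contra hk
    have := hb k (hn k hk)
    rw [hx0, mul_zero] at this
    exact hk (abs_nonpos_iff.1 this)
  refine ⟨LinearMap.range (Finsupp.linearCombination ℝ e), ?_, ?_⟩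
  · intro h
    have h2 : FiniteDimensional ℝ (ℕ →₀ ℝ) :=
      Module.Finite.equiv (LinearEquiv.ofInjective _ hinj).symm
    have h3 : LinearIndependent ℝ (fun i : ℕ => Finsupp.single i (1:ℝ)) :=
      Finsupp.linearIndependent_single_one ℝ ℕ
    exact not_finite_iff_infinite.2 (inferInstance : Infinite ℕ) h3.finite
  · rintro _ ⟨a, rfl⟩
    obtain ⟨n, -, h1, h2⟩ := key a
    refine ⟨∑ i ∈ Finset.range n, a i • m i, M.sum_mem fun i _ => M.smul_mem (a i) (hmM i), ?_⟩
    rw [h1]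
    exact h2

/-- `τ(T|_E) ≥ τ(T)` for any dense subspace `E`. -/
theorem tau_restrict_ge {X Y : Type*} [NormedAddCommGroup X] [NormedSpace ℝ X]
    [NormedAddCommGroup Y] [NormedSpace ℝ Y] (hX : ¬ FiniteDimensional ℝ X)
    (T : X →L[ℝ] Y) (E : Submodule ℝ X) (hE : Dense (E : Set X)) :
    opTau (T.comp E.subtypeL) ≥ opTau T := by
  have hbdd : BddAbove {r : ℝ | ∃ M : Submodule ℝ E, ¬ FiniteDimensional ℝ M ∧
      r = sphereInf (T.comp E.subtypeL) M} := by
    refine ⟨‖T.comp E.subtypeL‖, ?_⟩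
    rintro _ ⟨M, hM, rfl⟩
    obtain ⟨m, hm, h1, -⟩ := exists_unit M hM ∅
    refine (sphereInf_le' _ M m hm h1).trans ?_
    have := (T.comp E.subtypeL).le_opNorm m
    rwa [h1, mul_one] at this
  refine csSup_le ⟨_, ⊤, fun h => hX ?_, rfl⟩ ?_
  · exact Module.Finite.equiv (Submodule.topEquiv (R := ℝ) (M := X))
  rintro _ ⟨M, hM, rfl⟩
  refine le_of_forall_pos_le_add fun ε hε => ?_
  have hc := sphereInf_nonneg' T M
  have hmul := sphereInf_mul_le T M
  set c := sphereInf T M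
  have hT := norm_nonneg T
  have hD : 0 < 2 * (c + ‖T‖ + 1) := by positivity
  set δ := min (1/2) (ε / (2 * (c + ‖T‖ + 1))) with hδdef
  have hδ : 0 < δ := lt_min (by norm_num) (by positivity)
  have hδ' : δ ≤ 1/2 := min_le_left _ _
  have hδε : δ * (2 * (c + ‖T‖ + 1)) ≤ ε := (le_div_iff₀ hD).1 (min_le_right _ _)
  obtain ⟨N, hN, hNx⟩ := exists_perturb T E hE M hM δ hδ hδ'
  have hle : sphereInf (T.comp E.subtypeL) N ≤ opTau (T.comp E.subtypeL) :=
    le_csSup hbdd ⟨N, hN, rfl⟩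
  have hmain : c - ε ≤ sphereInf (T.comp E.subtypeL) N := by
    obtain ⟨m, hm, h1, -⟩ := exists_unit N hN ∅
    refine le_csInf ⟨_, m, hm, h1, rfl⟩ ?_
    rintro _ ⟨y, hy, hy1, rfl⟩
    obtain ⟨x, hx, hxy⟩ := hNx y hy
    have hy1' : ‖(y : X)‖ = 1 := hy1
    change c - ε ≤ ‖T (y : X)‖
    have e1 := hmul x hx
    have e2 : ‖T x‖ - ‖T (y : X)‖ ≤ ‖T‖ * ‖x - (y : X)‖ := by
      refine (norm_sub_norm_le _ _).trans ?_
      rw [← map_sub]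
      exact T.le_opNorm _
    have e3 : ‖x‖ - ‖(y : X)‖ ≤ ‖x - (y : X)‖ := norm_sub_norm_le _ _
    have e4 : ‖(y : X)‖ - ‖x‖ ≤ ‖x - (y : X)‖ := by
      rw [norm_sub_rev]
      exact norm_sub_norm_le _ _
    have e5 : ‖x‖ ≤ 2 := by nlinarith [norm_nonneg x]
    have e6 : ‖x - (y : X)‖ ≤ 2 * δ := by nlinarith
    have e7 : c * (1 - 2 * δ) ≤ c * ‖x‖ := by
      apply mul_le_mul_of_nonneg_left _ hc
      linarith
    have e8 : ‖T‖ * ‖x - (y : X)‖ ≤ ‖T‖ * (2 * δ) := mul_le_mul_of_nonneg_left e6 hT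
    nlinarith
  linarith
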